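/- arXiv:2201.03854 — 4 statements merged into one kernel-verified Lean document; each statement's English description precedes it below -/
import Mathlib

section
/- The bilinear antisymmetric bracket on 𝔤 = ℝ⁴ determined by the structure constants λ, α, β, a, b, r, z₁, z₂, z₃, z₄, w₁, w₂, θ₁, θ₂ satisfies the Jacobi identity [E,[F,G]] + [F,[G,E]] + [G,[E,F]] = 0 for all E, F, G ∈ 𝔤 if and only if the following fourteen polynomial equations hold: λa = 0; λb = 0; −w₂z₃ + w₁z₄ − 2αθ₁ + rz₁ = 0; −2z₄z₁ + 2z₃z₂ − 2aθ₁ + rz₃ = 0; −λz₃ − z₂b + z₄β − z₁a + z₃α = 0; −λz₄ − z₂a + z₄α + z₁b − z₃β = 0; λθ₁ − w₁z₄ + w₂z₃ − 2aθ₂ − rz₁ = 0; −λθ₂ + 2z₁w₂ − 2z₂w₁ − 2αθ₂ + rw₁ = 0; −w₂a − w₁b − z₂α − z₁β − αr = 0; −w₂b + w₁a − z₂β + z₁α + rβ = 0; λz₁ − w₂b − z₂β − w₁a − z₁α = 0; z₂a + z₁b − z₄α − z₃β − ar = 0; z₂b − z₁a − z₄β + z₃α + rb = 0; λz₂ − w₂a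 − z₂α + w₁b + z₁β = 0. -/
/-!
The Jacobiator of an alternating bilinear bracket is an alternating trilinear map. On a
four-dimensional space it therefore vanishes as soon as it vanishes on the four triples obtained by
omitting one basis vector. Up to sign, the sixteen coordinates of these four values are the fourteen
polynomials of the theorem, `lam * a` and `lam * b` each occurring twice.
-/

noncomputable section

/-- The bilinear antisymmetric bracket on ℝ⁴ determined by the structure constants. -/
def bk (lam α β a b r z₁ z₂ z₃ z₄ w₁ w₂ θ₁ θ₂ : ℝ) (E F : Fin 4 → ℝ) : Fin 4 → ℝ :=
  (E 0 * F 1 - E 1 * F 0) • (![-r, 0, -θ₁, -θ₂] : Fin 4 → ℝ) +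
  (E 0 * F 2 - E 2 * F 0) • (![-α, -β, -z₁, -w₁] : Fin 4 → ℝ) +
  (E 0 * F 3 - E 3 * F 0) • (![-a, -b, -z₃, z₁] : Fin 4 → ℝ) +
  (E 1 * F 2 - E 2 * F 1) • (![β, -α, -z₂, -w₂] : Fin 4 → ℝ) +
  (E 1 * F 3 - E 3 * F 1) • (![b, -a, -z₄, z₂] : Fin 4 → ℝ) +
  (E 2 * F 3 - E 3 * F 2) • (![0, 0, 0, -lam] : Fin 4 → ℝ)

section AlternatingMap

variable {R M N : Type*} [CommSemiring R] [AddCommMonoid M] [Module R M] [AddCommGroup N]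
  [Module R N] {n : ℕ}

theorem exists_perm_eq_succAbove_comp {v : Fin n → Fin (n + 1)} (hv : Function.Injective v) :
    ∃ (p : Fin (n + 1)) (σ : Equiv.Perm (Fin n)), v = p.succAbove ∘ σ := by
  have hv_surj : ¬Function.Surjective v := fun h ↦
    (Fintype.card_le_of_surjective v h).not_gt (by simp)
  obtain ⟨p, hp⟩ : ∃ p, ∀ i, v i ≠ p := by simpa [Function.Surjective] using hv_surj
  choose σ hσ using fun i ↦ Fin.exists_succAbove_eq (hp i)
  have hσ_inj : Function.Injective σ := fun i j hij ↦ hv (by rw [← hσ i, hij, hσ j])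
  exact ⟨p, Equiv.ofBijective σ (Finite.injective_iff_bijective.mp hσ_inj),
    funext fun i ↦ (hσ i).symm⟩

theorem alternatingMap_eq_zero_iff_succAbove (e : Module.Basis (Fin (n + 1)) R M)
    (f : M [⋀^Fin n]→ₗ[R] N) : f = 0 ↔ ∀ p : Fin (n + 1), f (e ∘ p.succAbove) = 0 := by
  refine ⟨fun h p ↦ by simp [h], fun h ↦ Module.Basis.ext_alternating e fun v hv ↦ ?_⟩
  obtain ⟨p, σ, rfl⟩ := exists_perm_eq_succAbove_comp hv
  calc f ((e ∘ p.succAbove) ∘ σ) = Equiv.Perm.sign σ • f (e ∘ p.succAbove) := f.map_perm _ σ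
    _ = 0 := by rw [h p, smul_zero]

theorem alternatingMap_fin_three_eq_zero_iff (e : Module.Basis (Fin 4) R M)
    (f : M [⋀^Fin 3]→ₗ[R] N) :
    f = 0 ↔ f ![e 1, e 2, e 3] = 0 ∧ f ![e 0, e 2, e 3] = 0 ∧
      f ![e 0, e 1, e 3] = 0 ∧ f ![e 0, e 1, e 2] = 0 := by
  have homit : ∀ p i j k : Fin 4, p.succAbove = ![i, j, k] →
      e ∘ p.succAbove = ![e i, e j, e k] := by
    intro p i j k h
    rw [h]
    ext l
    fin_cases l <;> rfl
  rw [alternatingMap_eq_zero_iff_succAbove e]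
  simp only [Fin.forall_fin_succ, Fin.reduceSucc, IsEmpty.forall_iff, and_true]
  rw [homit 0 1 2 3 (by decide), homit 1 0 2 3 (by decide), homit 2 0 1 3 (by decide),
    homit 3 0 1 2 (by decide)]

end AlternatingMap

section Jacobiator

variable {R M : Type*} [CommSemiring R] [AddCommGroup M] [Module R M]
  {B : M →ₗ[R] M →ₗ[R] M}

/-- The Jacobiator of an alternating bilinear bracket `B`, i.e. the left-hand side of the Jacobi
identity, bundled as an alternating trilinear map. -/
def jacobiator (hB : B.IsAlt) : M [⋀^Fin 3]→ₗ[R] M where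
  toMultilinearMap := MultilinearMap.mk'
    (fun v ↦ B (v 0) (B (v 1) (v 2)) + B (v 1) (B (v 2) (v 0)) + B (v 2) (B (v 0) (v 1)))
    (fun v i x y ↦ by fin_cases i <;> simp <;> abel)
    (fun v i c x ↦ by fin_cases i <;> simp)
  map_eq_zero_of_eq' v i j hv hij := by
    have hcancel : ∀ x y z, B x (B y z) + B x (B z y) = 0 := fun x y z ↦ by
      rw [← map_add, ← hB.neg y z, add_neg_cancel, map_zero]
    fin_cases i <;> fin_cases j <;> simp_all [hB.self_eq_zero]

theorem jacobiator_apply (hB : B.IsAlt) (v : Fin 3 → M) :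
    jacobiator hB v =
      B (v 0) (B (v 1) (v 2)) + B (v 1) (B (v 2) (v 0)) + B (v 2) (B (v 0) (v 1)) :=
  rfl

theorem jacobiator_eq_zero_iff (hB : B.IsAlt) :
    jacobiator hB = 0 ↔ ∀ x y z, B x (B y z) + B y (B z x) + B z (B x y) = 0 :=
  ⟨fun h x y z ↦ DFunLike.congr_fun h ![x, y, z],
    fun h ↦ AlternatingMap.ext fun v ↦ h (v 0) (v 1) (v 2)⟩

end Jacobiator

section StructureBracket

variable {R : Type*} [CommRing R] (lam α β a b r z₁ z₂ z₃ z₄ w₁ w₂ θ₁ θ₂ : R)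

/-- The bracket `bk` over an arbitrary commutative ring, bundled as a bilinear map so that it has a
`jacobiator`. The coordinates `0, 1, 2, 3` are those along `X, Y, Z, W`. -/
def structureBracket : (Fin 4 → R) →ₗ[R] (Fin 4 → R) →ₗ[R] (Fin 4 → R) :=
  LinearMap.mk₂ R
    (fun E F ↦
      (E 0 * F 1 - E 1 * F 0) • ![-r, 0, -θ₁, -θ₂] +
      (E 0 * F 2 - E 2 * F 0) • ![-α, -β, -z₁, -w₁] +
      (E 0 * F 3 - E 3 * F 0) • ![-a, -b, -z₃, z₁] +
      (E 1 * F 2 - E 2 * F 1) • ![β, -α, -z₂, -w₂] +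
      (E 1 * F 3 - E 3 * F 1) • ![b, -a, -z₄, z₂] +
      (E 2 * F 3 - E 3 * F 2) • ![0, 0, 0, -lam])
    (fun _ _ _ ↦ by simp only [Pi.add_apply]; module)
    (fun _ _ _ ↦ by simp only [Pi.smul_apply, smul_eq_mul]; module)
    (fun _ _ _ ↦ by simp only [Pi.add_apply]; module)
    (fun _ _ _ ↦ by simp only [Pi.smul_apply, smul_eq_mul]; module)

theorem isAlt_structureBracket :
    (structureBracket lam α β a b r z₁ z₂ z₃ z₄ w₁ w₂ θ₁ θ₂).IsAlt := fun E ↦ by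
  simp only [structureBracket, LinearMap.mk₂_apply]
  module

local notation "J" => jacobiator (isAlt_structureBracket lam α β a b r z₁ z₂ z₃ z₄ w₁ w₂ θ₁ θ₂)

local notation "e" => Pi.basisFun R (Fin 4)

theorem jacobiator_structureBracket_one_two_three :
    J ![e 1, e 2, e 3] =
      ![-(lam * b),
        lam * a,
        -(-lam * z₄ - z₂ * a + z₄ * α + z₁ * b - z₃ * β),
        -(lam * z₂ - w₂ * a - z₂ * α + w₁ * b + z₁ * β)] := by
  ext k
  fin_cases k <;> simp [jacobiator_apply, structureBracket] <;> ring

theorem jacobiator_structureBracket_zero_two_three :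
    J ![e 0, e 2, e 3] =
      ![lam * a,
        lam * b,
        -(-lam * z₃ - z₂ * b + z₄ * β - z₁ * a + z₃ * α),
        -(lam * z₁ - w₂ * b - z₂ * β - w₁ * a - z₁ * α)] := by
  ext k
  fin_cases k <;> simp [jacobiator_apply, structureBracket] <;> ring

theorem jacobiator_structureBracket_zero_one_three :
    J ![e 0, e 1, e 3] =
      ![-(z₂ * a + z₁ * b - z₄ * α - z₃ * β - a * r),
        -(z₂ * b - z₁ * a - z₄ * β + z₃ * α + r * b),
        -(-2 * z₄ * z₁ + 2 * z₃ * z₂ - 2 * a * θ₁ + r * z₃),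
        -(lam * θ₁ - w₁ * z₄ + w₂ * z₃ - 2 * a * θ₂ - r * z₁)] := by
  ext k
  fin_cases k <;> simp [jacobiator_apply, structureBracket] <;> ring

theorem jacobiator_structureBracket_zero_one_two :
    J ![e 0, e 1, e 2] =
      ![-(-w₂ * a - w₁ * b - z₂ * α - z₁ * β - α * r),
        -(-w₂ * b + w₁ * a - z₂ * β + z₁ * α + r * β),
        -(-w₂ * z₃ + w₁ * z₄ - 2 * α * θ₁ + r * z₁),
        -(-lam * θ₂ + 2 * z₁ * w₂ - 2 * z₂ * w₁ - 2 * α * θ₂ + r * w₁)] := by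
  ext k
  fin_cases k <;> simp [jacobiator_apply, structureBracket] <;> ring

end StructureBracket

theorem jacobi_iff_general {R : Type*} [CommRing R]
    (lam α β a b r z₁ z₂ z₃ z₄ w₁ w₂ θ₁ θ₂ : R) :
    let B := structureBracket lam α β a b r z₁ z₂ z₃ z₄ w₁ w₂ θ₁ θ₂
    (∀ E F G : Fin 4 → R, B E (B F G) + B F (B G E) + B G (B E F) = 0) ↔
    (lam * a = 0 ∧
      lam * b = 0 ∧
      -w₂ * z₃ + w₁ * z₄ - 2 * α * θ₁ + r * z₁ = 0 ∧
      -2 * z₄ * z₁ + 2 * z₃ * z₂ - 2 * a * θ₁ + r * z₃ = 0 ∧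
      -lam * z₃ - z₂ * b + z₄ * β - z₁ * a + z₃ * α = 0 ∧
      -lam * z₄ - z₂ * a + z₄ * α + z₁ * b - z₃ * β = 0 ∧
      lam * θ₁ - w₁ * z₄ + w₂ * z₃ - 2 * a * θ₂ - r * z₁ = 0 ∧
      -lam * θ₂ + 2 * z₁ * w₂ - 2 * z₂ * w₁ - 2 * α * θ₂ + r * w₁ = 0 ∧
      -w₂ * a - w₁ * b - z₂ * α - z₁ * β - α * r = 0 ∧
      -w₂ * b + w₁ * a - z₂ * β + z₁ * α + r * β = 0 ∧
      lam * z₁ - w₂ * b - z₂ * β - w₁ * a - z₁ * α = 0 ∧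
      z₂ * a + z₁ * b - z₄ * α - z₃ * β - a * r = 0 ∧
      z₂ * b - z₁ * a - z₄ * β + z₃ * α + r * b = 0 ∧
      lam * z₂ - w₂ * a - z₂ * α + w₁ * b + z₁ * β = 0) := by
  intro B
  rw [← jacobiator_eq_zero_iff (isAlt_structureBracket lam α β a b r z₁ z₂ z₃ z₄ w₁ w₂ θ₁ θ₂),
    alternatingMap_fin_three_eq_zero_iff (Pi.basisFun R (Fin 4)),
    jacobiator_structureBracket_one_two_three, jacobiator_structureBracket_zero_two_three,
    jacobiator_structureBracket_zero_one_three, jacobiator_structureBracket_zero_one_two]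
  simp only [Matrix.cons_eq_zero_iff, Matrix.zero_empty, neg_eq_zero, and_true]
  tauto

theorem jacobi_iff (lam α β a b r z₁ z₂ z₃ z₄ w₁ w₂ θ₁ θ₂ : ℝ) :
    (∀ E F G : Fin 4 → ℝ,
      bk lam α β a b r z₁ z₂ z₃ z₄ w₁ w₂ θ₁ θ₂ E (bk lam α β a b r z₁ z₂ z₃ z₄ w₁ w₂ θ₁ θ₂ F G) +
        bk lam α β a b r z₁ z₂ z₃ z₄ w₁ w₂ θ₁ θ₂ F (bk lam α β a b r z₁ z₂ z₃ z₄ w₁ w₂ θ₁ θ₂ G E) +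
        bk lam α β a b r z₁ z₂ z₃ z₄ w₁ w₂ θ₁ θ₂ G (bk lam α β a b r z₁ z₂ z₃ z₄ w₁ w₂ θ₁ θ₂ E F) = 0) ↔
    (lam * a = 0 ∧
      lam * b = 0 ∧
      -w₂ * z₃ + w₁ * z₄ - 2 * α * θ₁ + r * z₁ = 0 ∧
      -2 * z₄ * z₁ + 2 * z₃ * z₂ - 2 * a * θ₁ + r * z₃ = 0 ∧
      -lam * z₃ - z₂ * b + z₄ * β - z₁ * a + z₃ * α = 0 ∧
      -lam * z₄ - z₂ * a + z₄ * α + z₁ * b - z₃ * β = 0 ∧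
      lam * θ₁ - w₁ * z₄ + w₂ * z₃ - 2 * a * θ₂ - r * z₁ = 0 ∧
      -lam * θ₂ + 2 * z₁ * w₂ - 2 * z₂ * w₁ - 2 * α * θ₂ + r * w₁ = 0 ∧
      -w₂ * a - w₁ * b - z₂ * α - z₁ * β - α * r = 0 ∧
      -w₂ * b + w₁ * a - z₂ * β + z₁ * α + r * β = 0 ∧
      lam * z₁ - w₂ * b - z₂ * β - w₁ * a - z₁ * α = 0 ∧
      z₂ * a + z₁ * b - z₄ * α - z₃ * β - a * r = 0 ∧
      z₂ * b - z₁ * a - z₄ * β + z₃ * α + r * b = 0 ∧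
      lam * z₂ - w₂ * a - z₂ * α + w₁ * b + z₁ * β = 0) := by
  exact jacobi_iff_general lam α β a b r z₁ z₂ z₃ z₄ w₁ w₂ θ₁ θ₂

end
end

section
/- Assume the bracket [·,·] satisfies the Jacobi identity, so that 𝔤 is a Lie algebra. Then J is almost Kähler, i.e. dω(E,F,G) = 0 for all E, F, G ∈ 𝔤, if and only if θ₁ = 2a and θ₂ = −2α. -/
/-!
Write `eⁱʲᵏ` for the coordinate forms dual to `X, Y, Z, W`, so that `ω = e⁰¹ + e²³`. Modulo `Z` and
`W`, the operators `ad Z` and `ad W` act on `X` and `Y` as `α` and `a` times the identity plus a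
rotation, and `[W, Z]` is vertical, so the horizontal area form satisfies
`d e⁰¹ = -2α e⁰¹² - 2a e⁰¹³`. Modulo `X` and `Y`, the operators `ad X` and `ad Y` act on `Z` and `W`
without trace, so only the vertical part `θ₁ Z + θ₂ W` of `[Y, X]` contributes to the derivative of
the vertical area form: `d e²³ = -θ₂ e⁰¹² + θ₁ e⁰¹³`. As `e⁰¹²` and `e⁰¹³` are linearly independent,
`dω = 0` means that both coefficients of the sum vanish.
-/

noncomputable section

/-- The almost Hermitian structure J with J(X)=Y, J(Y)=-X, J(Z)=W, J(W)=-Z. -/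
def Jm (E : Fin 4 → ℝ) : Fin 4 → ℝ := ![-E 1, E 0, -E 3, E 2]

/-- The standard inner product, making {X,Y,Z,W} orthonormal. -/
def ip (E F : Fin 4 → ℝ) : ℝ := E 0 * F 0 + E 1 * F 1 + E 2 * F 2 + E 3 * F 3

/-- The Kähler form ω(E,F) = ⟨JE, F⟩. -/
def om (E F : Fin 4 → ℝ) : ℝ := ip (Jm E) F

/-- The left-invariant exterior derivative of the Kähler form. -/
def dom (lam α β a b r z₁ z₂ z₃ z₄ w₁ w₂ θ₁ θ₂ : ℝ) (E F G : Fin 4 → ℝ) : ℝ :=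
  -om (bk lam α β a b r z₁ z₂ z₃ z₄ w₁ w₂ θ₁ θ₂ E F) G - om (bk lam α β a b r z₁ z₂ z₃ z₄ w₁ w₂ θ₁ θ₂ F G) E - om (bk lam α β a b r z₁ z₂ z₃ z₄ w₁ w₂ θ₁ θ₂ G E) F

section CoordForm

open Matrix

variable (R : Type*) [CommRing R] {ι κ : Type*} [Fintype κ] [DecidableEq κ]

/-- The coordinate form `e^{s₁} ∧ ⋯ ∧ e^{sₖ}` on `ι → R`, normalised as the minor of the matrix with
rows `v` in the columns listed by `s`. -/
def coordForm (s : κ → ι) : (ι → R) [⋀^κ]→ₗ[R] R :=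
  detRowAlternating.compLinearMap (LinearMap.funLeft R R s)

lemma coordForm_apply (s : κ → ι) (v : κ → ι → R) :
    coordForm R s v = (of fun i j => v i (s j)).det :=
  rfl

lemma coordForm_fin_two (i j : ι) (u v : ι → R) :
    coordForm R ![i, j] ![u, v] = u i * v j - u j * v i :=
  det_fin_two _

lemma coordForm_fin_three (i j k : ι) (u v w : ι → R) :
    coordForm R ![i, j, k] ![u, v, w] =
      u i * v j * w k - u i * v k * w j - u j * v i * w k + u j * v k * w i + u k * v i * w j -
        u k * v j * w i :=
  det_fin_three _

lemma coordForm_single_self [DecidableEq ι] {s : κ → ι} (hs : s.Injective) :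
    coordForm R s (fun i => Pi.single (s i) 1) = 1 := by
  have h_one : (of fun i j => (Pi.single (s i) 1 : ι → R) (s j)) = 1 := by
    ext i j
    simp [Pi.single_apply, one_apply, hs.eq_iff, eq_comm]
  rw [coordForm_apply, h_one, det_one]

lemma coordForm_single_of_range_ne [DecidableEq ι] {s t : κ → ι} (ht : t.Injective)
    (hst : Set.range s ≠ Set.range t) :
    coordForm R s (fun i => Pi.single (t i) 1) = 0 := by
  have h_not_subset : ¬Set.range t ⊆ Set.range s := fun h =>
    hst (Set.eq_of_subset_of_ncard_le h <| by
      simpa only [← Set.image_univ, Set.ncard_image_of_injective _ ht] using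
        Set.ncard_image_le (f := s) Set.finite_univ).symm
  obtain ⟨_, ⟨i, rfl⟩, hi⟩ := Set.not_subset.mp h_not_subset
  exact det_eq_zero_of_row_eq_zero i fun j => Pi.single_eq_of_ne (fun h => hi ⟨j, h⟩) 1

theorem linearIndependent_coordForm {σ : Type*} {s : σ → κ → ι} (hs : ∀ p, (s p).Injective)
    (hrange : Function.Injective fun p => Set.range (s p)) :
    LinearIndependent R fun p => coordForm R (s p) := by
  classical
  let evalSingle (p : σ) : Module.Dual R ((ι → R) [⋀^κ]→ₗ[R] R) :=
    { toFun := fun η => η fun i => Pi.single (s p i) 1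
      map_add' := fun _ _ => rfl
      map_smul' := fun _ _ => rfl }
  exact .of_pairwise_dual_eq_zero_one _ evalSingle
    (fun p _ hpq => coordForm_single_of_range_ne R (hs p) (hrange.ne hpq.symm))
    (fun p => coordForm_single_self R (hs p))

lemma smul_coordForm_add_smul_coordForm_eq_zero_iff {s t : κ → ι} (hs : s.Injective)
    (ht : t.Injective) (hst : Set.range s ≠ Set.range t) {c d : R} :
    c • coordForm R s + d • coordForm R t = 0 ↔ c = 0 ∧ d = 0 := by
  have h_inj : ∀ p, (![s, t] p).Injective := Fin.forall_fin_two.mpr ⟨hs, ht⟩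
  have h_range : Function.Injective fun p => Set.range (![s, t] p) := by
    simpa [Function.Injective, Fin.forall_fin_two] using ⟨hst, hst.symm⟩
  have h_indep := Fintype.linearIndependent_iff.mp (linearIndependent_coordForm R h_inj h_range)
  refine ⟨fun h => ?_, fun ⟨hc, hd⟩ => by simp [hc, hd]⟩
  simpa [Fin.forall_fin_two] using h_indep ![c, d] (by simpa using h)

end CoordForm

section LeftInvariantDeriv

variable {R M N : Type*} [Semiring R] [AddCommMonoid M] [Module R M] [AddCommGroup N] [Module R N]

/-- The left-invariant exterior derivative of a 2-form, for an arbitrary operation `br` in the role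
of the Lie bracket. -/
def leftInvariantDeriv (br : M → M → M) (η : M [⋀^Fin 2]→ₗ[R] N) (E F G : M) : N :=
  -η ![br E F, G] - η ![br F G, E] - η ![br G E, F]

lemma leftInvariantDeriv_add (br : M → M → M) (η ξ : M [⋀^Fin 2]→ₗ[R] N) (E F G : M) :
    leftInvariantDeriv br (η + ξ) E F G =
      leftInvariantDeriv br η E F G + leftInvariantDeriv br ξ E F G := by
  simp only [leftInvariantDeriv, AlternatingMap.add_apply]
  abel

end LeftInvariantDeriv

lemma om_eq_coordForm_add (E F : Fin 4 → ℝ) :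
    om E F = coordForm ℝ ![0, 1] ![E, F] + coordForm ℝ ![2, 3] ![E, F] := by
  simp only [om, ip, Jm, coordForm_fin_two, Matrix.cons_val]
  ring

section KaehlerForm

variable (lam α β a b r z₁ z₂ z₃ z₄ w₁ w₂ θ₁ θ₂ : ℝ)

lemma bk_apply_zero (E F : Fin 4 → ℝ) :
    bk lam α β a b r z₁ z₂ z₃ z₄ w₁ w₂ θ₁ θ₂ E F 0 =
      -r * coordForm ℝ ![0, 1] ![E, F] - α * coordForm ℝ ![0, 2] ![E, F] -
        a * coordForm ℝ ![0, 3] ![E, F] + β * coordForm ℝ ![1, 2] ![E, F] +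
        b * coordForm ℝ ![1, 3] ![E, F] := by
  simp only [bk, coordForm_fin_two, Pi.add_apply, Pi.smul_apply, smul_eq_mul, Matrix.cons_val]
  ring

lemma bk_apply_one (E F : Fin 4 → ℝ) :
    bk lam α β a b r z₁ z₂ z₃ z₄ w₁ w₂ θ₁ θ₂ E F 1 =
      -β * coordForm ℝ ![0, 2] ![E, F] - b * coordForm ℝ ![0, 3] ![E, F] -
        α * coordForm ℝ ![1, 2] ![E, F] - a * coordForm ℝ ![1, 3] ![E, F] := by
  simp only [bk, coordForm_fin_two, Pi.add_apply, Pi.smul_apply, smul_eq_mul, Matrix.cons_val]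
  ring

lemma bk_apply_two (E F : Fin 4 → ℝ) :
    bk lam α β a b r z₁ z₂ z₃ z₄ w₁ w₂ θ₁ θ₂ E F 2 =
      -θ₁ * coordForm ℝ ![0, 1] ![E, F] - z₁ * coordForm ℝ ![0, 2] ![E, F] -
        z₃ * coordForm ℝ ![0, 3] ![E, F] - z₂ * coordForm ℝ ![1, 2] ![E, F] -
        z₄ * coordForm ℝ ![1, 3] ![E, F] := by
  simp only [bk, coordForm_fin_two, Pi.add_apply, Pi.smul_apply, smul_eq_mul, Matrix.cons_val]
  ring

lemma bk_apply_three (E F : Fin 4 → ℝ) :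
    bk lam α β a b r z₁ z₂ z₃ z₄ w₁ w₂ θ₁ θ₂ E F 3 =
      -θ₂ * coordForm ℝ ![0, 1] ![E, F] - w₁ * coordForm ℝ ![0, 2] ![E, F] +
        z₁ * coordForm ℝ ![0, 3] ![E, F] - w₂ * coordForm ℝ ![1, 2] ![E, F] +
        z₂ * coordForm ℝ ![1, 3] ![E, F] - lam * coordForm ℝ ![2, 3] ![E, F] := by
  simp only [bk, coordForm_fin_two, Pi.add_apply, Pi.smul_apply, smul_eq_mul, Matrix.cons_val]
  ring

lemma leftInvariantDeriv_bk_coordForm_zero_one (E F G : Fin 4 → ℝ) :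
    leftInvariantDeriv (bk lam α β a b r z₁ z₂ z₃ z₄ w₁ w₂ θ₁ θ₂) (coordForm ℝ ![0, 1]) E F G =
      -2 * α * coordForm ℝ ![0, 1, 2] ![E, F, G] - 2 * a * coordForm ℝ ![0, 1, 3] ![E, F, G] := by
  simp only [leftInvariantDeriv, coordForm_fin_two, coordForm_fin_three,
    bk_apply_zero, bk_apply_one]
  ring

lemma leftInvariantDeriv_bk_coordForm_two_three (E F G : Fin 4 → ℝ) :
    leftInvariantDeriv (bk lam α β a b r z₁ z₂ z₃ z₄ w₁ w₂ θ₁ θ₂) (coordForm ℝ ![2, 3]) E F G =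
      -θ₂ * coordForm ℝ ![0, 1, 2] ![E, F, G] + θ₁ * coordForm ℝ ![0, 1, 3] ![E, F, G] := by
  simp only [leftInvariantDeriv, coordForm_fin_two, coordForm_fin_three,
    bk_apply_two, bk_apply_three]
  ring

theorem dom_eq_coordForm_add (E F G : Fin 4 → ℝ) :
    dom lam α β a b r z₁ z₂ z₃ z₄ w₁ w₂ θ₁ θ₂ E F G =
      (-2 * α - θ₂) * coordForm ℝ ![0, 1, 2] ![E, F, G] +
        (θ₁ - 2 * a) * coordForm ℝ ![0, 1, 3] ![E, F, G] := by
  calc dom lam α β a b r z₁ z₂ z₃ z₄ w₁ w₂ θ₁ θ₂ E F G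
      = leftInvariantDeriv (bk lam α β a b r z₁ z₂ z₃ z₄ w₁ w₂ θ₁ θ₂)
          (coordForm ℝ ![0, 1] + coordForm ℝ ![2, 3]) E F G := by
        simp only [dom, om_eq_coordForm_add, leftInvariantDeriv, AlternatingMap.add_apply]
    _ = _ := by
        rw [leftInvariantDeriv_add, leftInvariantDeriv_bk_coordForm_zero_one,
          leftInvariantDeriv_bk_coordForm_two_three]
        ring

theorem almostKaehler_iff_general :
    (∀ E F G : Fin 4 → ℝ, dom lam α β a b r z₁ z₂ z₃ z₄ w₁ w₂ θ₁ θ₂ E F G = 0) ↔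
    (θ₁ = 2 * a ∧ θ₂ = -2 * α) := by
  have h_range : Set.range ![(0 : Fin 4), 1, 2] ≠ Set.range ![0, 1, 3] := by
    rw [Ne, Set.ext_iff]
    simp only [Set.mem_range]
    decide
  calc (∀ E F G : Fin 4 → ℝ, dom lam α β a b r z₁ z₂ z₃ z₄ w₁ w₂ θ₁ θ₂ E F G = 0)
      ↔ (-2 * α - θ₂) • coordForm ℝ ![(0 : Fin 4), 1, 2] +
          (θ₁ - 2 * a) • coordForm ℝ ![(0 : Fin 4), 1, 3] = 0 := by
        simp only [dom_eq_coordForm_add]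
        exact ⟨fun h => AlternatingMap.ext ((FinVec.forall_iff (m := 3) _).mp h),
          fun h E F G => DFunLike.congr_fun h ![E, F, G]⟩
    _ ↔ -2 * α - θ₂ = 0 ∧ θ₁ - 2 * a = 0 :=
        smul_coordForm_add_smul_coordForm_eq_zero_iff ℝ (by decide) (by decide) h_range
    _ ↔ θ₁ = 2 * a ∧ θ₂ = -2 * α := by
        rw [sub_eq_zero, sub_eq_zero, eq_comm, and_comm]

end KaehlerForm

theorem almostKaehler_iff (lam α β a b r z₁ z₂ z₃ z₄ w₁ w₂ θ₁ θ₂ : ℝ)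
    (hJac : (∀ E F G : Fin 4 → ℝ,
      bk lam α β a b r z₁ z₂ z₃ z₄ w₁ w₂ θ₁ θ₂ E (bk lam α β a b r z₁ z₂ z₃ z₄ w₁ w₂ θ₁ θ₂ F G) +
        bk lam α β a b r z₁ z₂ z₃ z₄ w₁ w₂ θ₁ θ₂ F (bk lam α β a b r z₁ z₂ z₃ z₄ w₁ w₂ θ₁ θ₂ G E) +
        bk lam α β a b r z₁ z₂ z₃ z₄ w₁ w₂ θ₁ θ₂ G (bk lam α β a b r z₁ z₂ z₃ z₄ w₁ w₂ θ₁ θ₂ E F) = 0)) :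
    (∀ E F G : Fin 4 → ℝ, dom lam α β a b r z₁ z₂ z₃ z₄ w₁ w₂ θ₁ θ₂ E F G = 0) ↔
    (θ₁ = 2 * a ∧ θ₂ = -2 * α) :=
  almostKaehler_iff_general lam α β a b r z₁ z₂ z₃ z₄ w₁ w₂ θ₁ θ₂

end
end

section
/- Assume the bracket [·,·] satisfies the Jacobi identity, so that 𝔤 is a Lie algebra. Then J is integrable, i.e. the Nijenhuis tensor N(E,F) = 0 for all E, F ∈ 𝔤, if and only if 2z₁ − z₄ − w₂ = 0 and 2z₂ + z₃ + w₁ = 0. -/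
/-!
The Nijenhuis tensor of an almost complex structure `J` is alternating and conjugate-linear in each
argument, so it is determined by its values on pairs of vectors generating the space over `J`.
On `ℝ⁴` the vectors `X` and `Z` generate, and `N(X, Z)` lies in the plane of `Z` and `W`, where its
coordinates are, up to sign, the two linear forms of the criterion.
-/

noncomputable section

/-- The Nijenhuis tensor of J. -/
def NT (lam α β a b r z₁ z₂ z₃ z₄ w₁ w₂ θ₁ θ₂ : ℝ) (E F : Fin 4 → ℝ) : Fin 4 → ℝ :=
  bk lam α β a b r z₁ z₂ z₃ z₄ w₁ w₂ θ₁ θ₂ E F + Jm (bk lam α β a b r z₁ z₂ z₃ z₄ w₁ w₂ θ₁ θ₂ (Jm E) F) + Jm (bk lam α β a b r z₁ z₂ z₃ z₄ w₁ w₂ θ₁ θ₂ E (Jm F)) -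
    bk lam α β a b r z₁ z₂ z₃ z₄ w₁ w₂ θ₁ θ₂ (Jm E) (Jm F)

section Nijenhuis

variable {R V : Type*} [CommRing R] [AddCommGroup V] [Module R V]
  {B : V →ₗ[R] V →ₗ[R] V} {J : Module.End R V}

/-- The Nijenhuis tensor of an almost complex structure `J` with respect to a bilinear bracket `B`.
The first term `B x y` stands for the `-J² (B x y)` of the tensor of a general endomorphism, so this
is the usual notion only when `J² = -1`. -/
def nijenhuis (B : V →ₗ[R] V →ₗ[R] V) (J : Module.End R V) : V →ₗ[R] V →ₗ[R] V :=
  B + (B.comp J).compr₂ J + (B.compl₂ J).compr₂ J - B.compl₁₂ J J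

theorem nijenhuis_apply (x y : V) :
    nijenhuis B J x y = B x y + J (B (J x) y) + J (B x (J y)) - B (J x) (J y) :=
  rfl

theorem nijenhuis_isAlt (hB : B.IsAlt) : (nijenhuis B J).IsAlt := fun x => by
  have hskew : B (J x) x = -B x (J x) := (hB.neg x (J x)).symm
  rw [nijenhuis_apply, hB x, hB (J x), hskew, map_neg]
  abel

theorem nijenhuis_map_left (hJ : ∀ x, J (J x) = -x) (x y : V) :
    nijenhuis B J (J x) y = -J (nijenhuis B J x y) := by
  simp only [nijenhuis_apply, hJ, map_add, map_sub, map_neg, LinearMap.neg_apply]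
  abel

theorem nijenhuis_map_right (hJ : ∀ x, J (J x) = -x) (x y : V) :
    nijenhuis B J x (J y) = -J (nijenhuis B J x y) := by
  simp only [nijenhuis_apply, hJ, map_add, map_sub, map_neg]
  abel

theorem nijenhuis_eq_zero_iff_forall_mem (hJ : ∀ x, J (J x) = -x) {S : Set V}
    (hS : Submodule.span R (S ∪ J '' S) = ⊤) :
    nijenhuis B J = 0 ↔ ∀ x ∈ S, ∀ y ∈ S, nijenhuis B J x y = 0 := by
  refine ⟨fun h x _ y _ => by rw [h, LinearMap.zero_apply, LinearMap.zero_apply], fun h => ?_⟩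
  have hright : ∀ x ∈ S, nijenhuis B J x = 0 := fun x hx => by
    refine LinearMap.ext_on hS ?_
    rintro _ (hy | ⟨y, hy, rfl⟩)
    · exact h x hx _ hy
    · simp only [nijenhuis_map_right hJ, h x hx y hy, map_zero, neg_zero, LinearMap.zero_apply]
  refine LinearMap.ext_on hS ?_
  rintro _ (hx | ⟨x, hx, rfl⟩)
  · exact hright _ hx
  · ext y
    simp only [nijenhuis_map_left hJ, hright x hx, LinearMap.zero_apply, map_zero, neg_zero]

theorem nijenhuis_eq_zero_iff_of_span_pair (hB : B.IsAlt) (hJ : ∀ x, J (J x) = -x) {x y : V}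
    (hxy : Submodule.span R ({x, y} ∪ J '' {x, y}) = ⊤) :
    nijenhuis B J = 0 ↔ nijenhuis B J x y = 0 := by
  have hN : (nijenhuis B J).IsAlt := nijenhuis_isAlt hB
  have hswap : nijenhuis B J y x = -nijenhuis B J x y := (hN.neg x y).symm
  simp [nijenhuis_eq_zero_iff_forall_mem hJ hxy, hN x, hN y, hswap]

end Nijenhuis

/-- The almost complex structure `Jm` as an endomorphism. -/
def JmLin : Module.End ℝ (Fin 4 → ℝ) where
  toFun := Jm
  map_add' E F := by ext i; fin_cases i <;> simp [Jm] <;> ring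
  map_smul' c E := by ext i; fin_cases i <;> simp [Jm]

theorem JmLin_JmLin (E : Fin 4 → ℝ) : JmLin (JmLin E) = -E := by
  ext i
  fin_cases i <;> simp [JmLin, Jm]

theorem JmLin_single_zero : JmLin (Pi.single 0 1) = Pi.single 1 1 := by
  ext i
  fin_cases i <;> simp [JmLin, Jm]

theorem JmLin_single_two : JmLin (Pi.single 2 1) = Pi.single 3 1 := by
  ext i
  fin_cases i <;> simp [JmLin, Jm]

theorem span_single_union_image_JmLin :
    Submodule.span ℝ
      (({Pi.single 0 1, Pi.single 2 1} : Set (Fin 4 → ℝ)) ∪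
        JmLin '' {Pi.single 0 1, Pi.single 2 1}) = ⊤ := by
  rw [eq_top_iff, ← (Pi.basisFun ℝ (Fin 4)).span_eq, Set.image_pair, JmLin_single_zero,
    JmLin_single_two]
  refine Submodule.span_mono ?_
  rintro _ ⟨i, rfl⟩
  fin_cases i <;> simp

section Bracket

variable (lam α β a b r z₁ z₂ z₃ z₄ w₁ w₂ θ₁ θ₂ : ℝ)

/-- The bracket `bk` as a bilinear map. -/
def bkBilin : (Fin 4 → ℝ) →ₗ[ℝ] (Fin 4 → ℝ) →ₗ[ℝ] (Fin 4 → ℝ) :=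
  LinearMap.mk₂ ℝ (bk lam α β a b r z₁ z₂ z₃ z₄ w₁ w₂ θ₁ θ₂)
    (fun E E' F => by simp only [bk, Pi.add_apply]; module)
    (fun c E F => by simp only [bk, Pi.smul_apply, smul_eq_mul]; module)
    (fun E F F' => by simp only [bk, Pi.add_apply]; module)
    (fun c E F => by simp only [bk, Pi.smul_apply, smul_eq_mul]; module)

theorem bkBilin_isAlt : (bkBilin lam α β a b r z₁ z₂ z₃ z₄ w₁ w₂ θ₁ θ₂).IsAlt := fun E => by
  simp only [bkBilin, LinearMap.mk₂_apply, bk]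
  module

theorem nijenhuis_bkBilin_apply (E F : Fin 4 → ℝ) :
    nijenhuis (bkBilin lam α β a b r z₁ z₂ z₃ z₄ w₁ w₂ θ₁ θ₂) JmLin E F =
      NT lam α β a b r z₁ z₂ z₃ z₄ w₁ w₂ θ₁ θ₂ E F :=
  rfl

theorem NT_single_zero_single_two :
    NT lam α β a b r z₁ z₂ z₃ z₄ w₁ w₂ θ₁ θ₂ (Pi.single 0 1) (Pi.single 2 1) =
      ![0, 0, -(2 * z₁ - z₄ - w₂), -(2 * z₂ + z₃ + w₁)] := by
  ext i
  fin_cases i <;> simp [NT, bk, Jm] <;> ring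

end Bracket

theorem integrable_iff_general (lam α β a b r z₁ z₂ z₃ z₄ w₁ w₂ θ₁ θ₂ : ℝ) :
    (∀ E F : Fin 4 → ℝ, NT lam α β a b r z₁ z₂ z₃ z₄ w₁ w₂ θ₁ θ₂ E F = 0) ↔
    (2 * z₁ - z₄ - w₂ = 0 ∧ 2 * z₂ + z₃ + w₁ = 0) := by
  have hpair := nijenhuis_eq_zero_iff_of_span_pair
    (bkBilin_isAlt lam α β a b r z₁ z₂ z₃ z₄ w₁ w₂ θ₁ θ₂) JmLin_JmLin
    span_single_union_image_JmLin
  simp only [LinearMap.ext_iff₂, nijenhuis_bkBilin_apply, NT_single_zero_single_two,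
    LinearMap.zero_apply] at hpair
  rw [hpair]
  simp only [Matrix.cons_eq_zero_iff, neg_eq_zero, Matrix.zero_empty, true_and, and_true]

theorem integrable_iff (lam α β a b r z₁ z₂ z₃ z₄ w₁ w₂ θ₁ θ₂ : ℝ)
    (hJac : (∀ E F G : Fin 4 → ℝ,
      bk lam α β a b r z₁ z₂ z₃ z₄ w₁ w₂ θ₁ θ₂ E (bk lam α β a b r z₁ z₂ z₃ z₄ w₁ w₂ θ₁ θ₂ F G) +
        bk lam α β a b r z₁ z₂ z₃ z₄ w₁ w₂ θ₁ θ₂ F (bk lam α β a b r z₁ z₂ z₃ z₄ w₁ w₂ θ₁ θ₂ G E) +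
        bk lam α β a b r z₁ z₂ z₃ z₄ w₁ w₂ θ₁ θ₂ G (bk lam α β a b r z₁ z₂ z₃ z₄ w₁ w₂ θ₁ θ₂ E F) = 0)) :
    (∀ E F : Fin 4 → ℝ, NT lam α β a b r z₁ z₂ z₃ z₄ w₁ w₂ θ₁ θ₂ E F = 0) ↔
    (2 * z₁ - z₄ - w₂ = 0 ∧ 2 * z₂ + z₃ + w₁ = 0) :=
  integrable_iff_general lam α β a b r z₁ z₂ z₃ z₄ w₁ w₂ θ₁ θ₂

end
end

section
/- Assume the bracket [·,·] satisfies the Jacobi identity, so that 𝔤 is a Lie algebra. Then the second fundamental form B^𝒱 of the vertical distribution vanishes identically, i.e. ℋ(∇_U V + ∇_V U) = 0 for all U, V ∈ 𝒱 = span{Z, W} (equivalently, the foliation tangent to 𝒱 is totally geodesic), if and only if z₁ = 0, z₂ = 0, z₃ + w₁ = 0 and z₄ + w₂ = 0. -/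
noncomputable section

/-- The Levi-Civita connection, via the Koszul formula
2⟨∇_E F, G⟩ = ⟨[E,F],G⟩ - ⟨[F,G],E⟩ + ⟨[G,E],F⟩ on the orthonormal basis. -/
def grad (lam α β a b r z₁ z₂ z₃ z₄ w₁ w₂ θ₁ θ₂ : ℝ) (E F : Fin 4 → ℝ) : Fin 4 → ℝ := fun i =>
  (1 / 2) * (ip (bk lam α β a b r z₁ z₂ z₃ z₄ w₁ w₂ θ₁ θ₂ E F) (Pi.single i 1) -
    ip (bk lam α β a b r z₁ z₂ z₃ z₄ w₁ w₂ θ₁ θ₂ F (Pi.single i 1)) E + ip (bk lam α β a b r z₁ z₂ z₃ z₄ w₁ w₂ θ₁ θ₂ (Pi.single i 1) E) F)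

/-- Orthogonal projection onto the horizontal space span{X, Y}. -/
def hproj (E : Fin 4 → ℝ) : Fin 4 → ℝ := ![E 0, E 1, 0, 0]

/-!
Antisymmetry of the bracket cancels the first two Koszul terms in `∇_U V + ∇_V U` and leaves
`⟨∇_U V + ∇_V U, G⟩ = ⟨[G, U], V⟩ + ⟨[G, V], U⟩`. So the second fundamental form of `𝒱` in the
direction of a horizontal `G` is the symmetric part of the compression of `ad G` to `𝒱`. For
`G = X, Y` this compression has trace zero (the leaves are minimal), hence the symmetric part is
given by its `ZZ` and `ZW` entries: `-z₁`, `-(z₃ + w₁)/2` for `X` and `-z₂`, `-(z₄ + w₂)/2` for `Y`.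
-/

-- The bilinear form whose matrix has rows `(A, B)` and `(B, -A)`.
theorem traceless_symm_form_eq_zero_iff {R M : Type*} [Ring R] [AddCommGroup M] [Module R M]
    {A B : M} :
    (∀ x y u v : R, (x * u - y * v) • A + (x * v + y * u) • B = 0) ↔ A = 0 ∧ B = 0 := by
  refine ⟨fun h ↦ ⟨?_, ?_⟩, ?_⟩
  · simpa using h 1 0 1 0
  · simpa using h 1 0 0 1
  · rintro ⟨rfl, rfl⟩
    simp

theorem ip_neg_left (E F : Fin 4 → ℝ) : ip (-E) F = -ip E F := by
  simp only [ip, Pi.neg_apply]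
  ring

section StructureConstants

variable {lam α β a b r z₁ z₂ z₃ z₄ w₁ w₂ θ₁ θ₂ : ℝ}

local notation "bracket" => bk lam α β a b r z₁ z₂ z₃ z₄ w₁ w₂ θ₁ θ₂
local notation "nabla" => grad lam α β a b r z₁ z₂ z₃ z₄ w₁ w₂ θ₁ θ₂

theorem bk_swap (E F : Fin 4 → ℝ) : bracket F E = -bracket E F := by
  simp only [bk]
  module

theorem grad_add_grad_swap_apply (U V : Fin 4 → ℝ) (i : Fin 4) :
    (nabla U V + nabla V U) i =
      ip (bracket (Pi.single i 1) U) V + ip (bracket (Pi.single i 1) V) U := by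
  simp only [Pi.add_apply, grad, bk_swap U V, bk_swap (Pi.single i 1), ip_neg_left]
  ring

variable {U V : Fin 4 → ℝ}

theorem bk_single_zero_of_vertical (hU₀ : U 0 = 0) (hU₁ : U 1 = 0) :
    bracket (Pi.single 0 1) U = U 2 • ![-α, -β, -z₁, -w₁] + U 3 • ![-a, -b, -z₃, z₁] := by
  simp [bk, hU₀, hU₁]

theorem bk_single_one_of_vertical (hU₀ : U 0 = 0) (hU₁ : U 1 = 0) :
    bracket (Pi.single 1 1) U = U 2 • ![β, -α, -z₂, -w₂] + U 3 • ![b, -a, -z₄, z₂] := by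
  simp [bk, hU₀, hU₁]

theorem hproj_grad_add_grad_swap_of_vertical
    (hU₀ : U 0 = 0) (hU₁ : U 1 = 0) (hV₀ : V 0 = 0) (hV₁ : V 1 = 0) :
    hproj (nabla U V + nabla V U) =
      (U 2 * V 2 - U 3 * V 3) • ![-2 * z₁, -2 * z₂, 0, 0] +
        (U 2 * V 3 + U 3 * V 2) • ![-(z₃ + w₁), -(z₄ + w₂), 0, 0] := by
  have hX : (nabla U V + nabla V U) 0 =
      (U 2 * V 2 - U 3 * V 3) * (-2 * z₁) + (U 2 * V 3 + U 3 * V 2) * -(z₃ + w₁) := by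
    rw [grad_add_grad_swap_apply, bk_single_zero_of_vertical hU₀ hU₁,
      bk_single_zero_of_vertical hV₀ hV₁]
    simp only [ip, hU₀, hU₁, hV₀, hV₁, Pi.add_apply, Pi.smul_apply, smul_eq_mul, Matrix.cons_val]
    ring
  have hY : (nabla U V + nabla V U) 1 =
      (U 2 * V 2 - U 3 * V 3) * (-2 * z₂) + (U 2 * V 3 + U 3 * V 2) * -(z₄ + w₂) := by
    rw [grad_add_grad_swap_apply, bk_single_one_of_vertical hU₀ hU₁,
      bk_single_one_of_vertical hV₀ hV₁]
    simp only [ip, hU₀, hU₁, hV₀, hV₁, Pi.add_apply, Pi.smul_apply, smul_eq_mul, Matrix.cons_val]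
    ring
  rw [hproj, hX, hY]
  simp

theorem totallyGeodesic_iff_general :
    (∀ U V : Fin 4 → ℝ, U 0 = 0 → U 1 = 0 → V 0 = 0 → V 1 = 0 →
      hproj (nabla U V + nabla V U) = 0) ↔
    (z₁ = 0 ∧ z₂ = 0 ∧ z₃ + w₁ = 0 ∧ z₄ + w₂ = 0) :=
  calc
    _ ↔ ∀ x y u v : ℝ, (x * u - y * v) • ![-2 * z₁, -2 * z₂, 0, 0] +
        (x * v + y * u) • ![-(z₃ + w₁), -(z₄ + w₂), 0, 0] = 0 := by
      constructor
      · intro h x y u v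
        have hB := h ![0, 0, x, y] ![0, 0, u, v] rfl rfl rfl rfl
        rwa [hproj_grad_add_grad_swap_of_vertical rfl rfl rfl rfl] at hB
      · intro h U V hU₀ hU₁ hV₀ hV₁
        rw [hproj_grad_add_grad_swap_of_vertical hU₀ hU₁ hV₀ hV₁]
        exact h (U 2) (U 3) (V 2) (V 3)
    _ ↔ ![-2 * z₁, -2 * z₂, 0, 0] = 0 ∧ ![-(z₃ + w₁), -(z₄ + w₂), 0, 0] = 0 :=
      traceless_symm_form_eq_zero_iff
    _ ↔ z₁ = 0 ∧ z₂ = 0 ∧ z₃ + w₁ = 0 ∧ z₄ + w₂ = 0 := by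
      simp [and_assoc, -neg_add_rev]

end StructureConstants

theorem totallyGeodesic_iff (lam α β a b r z₁ z₂ z₃ z₄ w₁ w₂ θ₁ θ₂ : ℝ)
    (hJac : (∀ E F G : Fin 4 → ℝ,
      bk lam α β a b r z₁ z₂ z₃ z₄ w₁ w₂ θ₁ θ₂ E (bk lam α β a b r z₁ z₂ z₃ z₄ w₁ w₂ θ₁ θ₂ F G) +
        bk lam α β a b r z₁ z₂ z₃ z₄ w₁ w₂ θ₁ θ₂ F (bk lam α β a b r z₁ z₂ z₃ z₄ w₁ w₂ θ₁ θ₂ G E) +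
        bk lam α β a b r z₁ z₂ z₃ z₄ w₁ w₂ θ₁ θ₂ G (bk lam α β a b r z₁ z₂ z₃ z₄ w₁ w₂ θ₁ θ₂ E F) = 0)) :
    (∀ U V : Fin 4 → ℝ, U 0 = 0 → U 1 = 0 → V 0 = 0 → V 1 = 0 →
      hproj (grad lam α β a b r z₁ z₂ z₃ z₄ w₁ w₂ θ₁ θ₂ U V + grad lam α β a b r z₁ z₂ z₃ z₄ w₁ w₂ θ₁ θ₂ V U) = 0) ↔
    (z₁ = 0 ∧ z₂ = 0 ∧ z₃ + w₁ = 0 ∧ z₄ + w₂ = 0) :=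
  totallyGeodesic_iff_general

end
end
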